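/- arXiv:2510.26454 — 2 statements merged into one kernel-verified Lean document; each statement's English description precedes it below -/
import Mathlib

section
/- Let U ⊆ ℝⁿ be an open set such that the tube Ω := { z ∈ ℂⁿ : (Re z₁, …, Re zₙ) ∈ U } is a nonempty connected open subset of ℂⁿ, and let Δ ⊆ ℂ be an open disc. Let Conv(Ω) denote the convex hull of Ω in ℂⁿ (identified with ℝ^{2n}). Let F : Conv(Ω) × Δ → ℂ be a locally bounded function such that: (i) F is holomorphic (jointly complex differentiable) on the open set Ω × Δ ⊆ ℂ^{n+1}; and (ii) for every fixed t₀ ∈ Δ, the function z ↦ F(z, t₀) is holomorphic on Conv(Ω). Then F is holomorphic on Conv(Ω) × Δ. -/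
/-!
Fix `z₁` near which `F` is jointly holomorphic and restrict `F` to the complex lines through `z₁`:
the functions `l ↦ F (z₁ + l • (z - z₁), t)` are holomorphic and uniformly bounded on a fixed disc,
and for small `l` they depend holomorphically on the parameter `(z, t)`. The Taylor coefficients at
`l = 0` are uniform limits of difference quotients with `l → 0`, so they are holomorphic in `(z, t)`
as well; by Schwarz's lemma the Taylor polynomials converge uniformly in `(z, t)` at `l = 1`, so
`F` is holomorphic there. How far from `z₁` this reaches depends only on the polydisc on which `F`
is bounded, not on the neighbourhood of `z₁` one starts from. Hence the set of `z` near which `F` is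
jointly holomorphic is relatively closed as well as open, and it is everything by connectedness.
-/

section

open Filter Metric Set Topology

variable {E X G : Type*} [NormedAddCommGroup E] [NormedSpace ℂ E] [NormedAddCommGroup X]
  [NormedSpace ℂ X] [NormedAddCommGroup G]

lemma mapsTo_closedBall_two_mul_of_norm_le {α : Type*} {φ : α → G} {s : Set α} {c : α} {M : ℝ}
    (hc : c ∈ s) (hM : ∀ y ∈ s, ‖φ y‖ ≤ M) : MapsTo φ s (closedBall (φ c) (2 * M)) := by
  intro y hy
  rw [mem_closedBall, two_mul]
  exact (dist_le_norm_add_norm _ _).trans (add_le_add (hM y hy) (hM c hc))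

variable [NormedSpace ℂ G]

lemma norm_fderiv_le_of_forall_ball_norm_le {φ : E → G} {c : E} {R M : ℝ} (hR : 0 < R)
    (hφ : DifferentiableOn ℂ φ (ball c R)) (hM : ∀ y ∈ ball c R, ‖φ y‖ ≤ M) :
    ‖fderiv ℂ φ c‖ ≤ 2 * M / R :=
  Complex.norm_fderiv_le_div_of_mapsTo_ball hφ
    (mapsTo_closedBall_two_mul_of_norm_le (mem_ball_self hR) hM) hR

lemma uniformCauchySeqOn_fderiv {ι : Type*} {l : Filter ι} {f : ι → E → G} {s V : Set E} {r : ℝ}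
    (hf : UniformCauchySeqOn f l V) (hd : ∀ᶠ n in l, DifferentiableOn ℂ (f n) V) (hr : 0 < r)
    (hsV : ∀ y ∈ s, ball y r ⊆ V) : UniformCauchySeqOn (fun n ↦ fderiv ℂ (f n)) l s := by
  intro u hu
  obtain ⟨ε, hε, hεu⟩ := mem_uniformity_dist.1 hu
  have hsmall := hf _ (dist_mem_uniformity (show 0 < ε * r / 4 by positivity))
  filter_upwards [hsmall, hd.prod_mk hd] with ⟨m, n⟩ hmn ⟨hm, hn⟩ y hy
  apply hεu
  have hVy : V ∈ 𝓝 y := mem_of_superset (ball_mem_nhds y hr) (hsV y hy)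
  have hcauchy : ‖fderiv ℂ (f m - f n) y‖ ≤ 2 * (ε * r / 4) / r :=
    norm_fderiv_le_of_forall_ball_norm_le hr ((hm.sub hn).mono (hsV y hy)) fun w hw ↦ by
      simpa [dist_eq_norm] using (hmn w (hsV y hy hw)).le
  rw [fderiv_sub (hm.differentiableAt hVy) (hn.differentiableAt hVy)] at hcauchy
  calc dist (fderiv ℂ (f m) y) (fderiv ℂ (f n) y)
      ≤ 2 * (ε * r / 4) / r := by rwa [dist_eq_norm]
    _ = ε / 2 := by field_simp; ring
    _ < ε := half_lt_self hε

lemma differentiableOn_of_tendstoUniformlyOn [CompleteSpace G] {ι : Type*} {l : Filter ι}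
    [l.NeBot] {f : ι → E → G} {g : E → G} {V : Set E} (hV : IsOpen V)
    (hfg : TendstoUniformlyOn f g l V) (hf : ∀ᶠ n in l, DifferentiableOn ℂ (f n) V) :
    DifferentiableOn ℂ g V := by
  intro x hx
  obtain ⟨r, hr, hrV⟩ := Metric.isOpen_iff.1 hV x hx
  have hball : ball x (r / 2) ∈ 𝓝 x := ball_mem_nhds x (half_pos hr)
  have hsub : ∀ y ∈ ball x (r / 2), ball y (r / 2) ⊆ V := fun y hy ↦
    (ball_subset_ball' (by linarith [mem_ball.1 hy])).trans hrV
  have hmem : ∀ y ∈ ball x (r / 2), y ∈ V := fun y hy ↦ hsub y hy (mem_ball_self (half_pos hr))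
  have hcauchy := uniformCauchySeqOn_fderiv hfg.uniformCauchySeqOn hf (half_pos hr) hsub
  choose! g' hg' using fun y (hy : y ∈ ball x (r / 2)) ↦
    CompleteSpace.complete (hcauchy.cauchy_map hy)
  have hfderiv : TendstoUniformlyOnFilter (fun n ↦ fderiv ℂ (f n)) g' l (𝓝 x) :=
    (hcauchy.tendstoUniformlyOn_of_tendsto hg').tendstoUniformlyOnFilter.mono_right
      (le_principal_iff.2 hball)
  have hlim : HasFDerivAt g (g' x) x := by
    refine hasFDerivAt_of_tendstoUniformlyOnFilter (f := f) hfderiv ?_ ?_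
    · filter_upwards [hf.prod_mk hball] with ⟨n, y⟩ ⟨hn, hy⟩
      exact (hn.differentiableAt (hV.mem_nhds (hmem y hy))).hasFDerivAt
    · filter_upwards [hball] with y hy using hfg.tendsto_at (hmem y hy)
  exact hlim.differentiableAt.differentiableWithinAt

/-- A family of functions `f x`, `x ∈ V`, which are holomorphic and bounded by `M` on the disc of
radius `R` around `c`, and whose values at points near `c`, but different from `c`, are holomorphic
in the parameter `x`. Excluding `c` makes the notion visibly stable under `dslope`, whose value at
`c` is a derivative. -/
structure IsBoundedDiscFamily (f : X → ℂ → G) (V : Set X) (c : ℂ) (R M : ℝ) : Prop where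
  radius_pos : 0 < R
  differentiableOn : ∀ x ∈ V, DifferentiableOn ℂ (f x) (ball c R)
  norm_le : ∀ x ∈ V, ∀ l ∈ ball c R, ‖f x l‖ ≤ M
  eventually_differentiableOn : ∀ᶠ l in 𝓝[≠] c, DifferentiableOn ℂ (fun x ↦ f x l) V

namespace IsBoundedDiscFamily

variable {f : X → ℂ → G} {V : Set X} {c : ℂ} {R M : ℝ}

lemma mapsTo_closedBall (hf : IsBoundedDiscFamily f V c R M) {x : X} (hx : x ∈ V) :
    MapsTo (f x) (ball c R) (closedBall (f x c) (2 * M)) :=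
  mapsTo_closedBall_two_mul_of_norm_le (mem_ball_self hf.radius_pos) (hf.norm_le x hx)

lemma tendstoUniformlyOn_center (hf : IsBoundedDiscFamily f V c R M) :
    TendstoUniformlyOn (fun l x ↦ f x l) (fun x ↦ f x c) (𝓝[≠] c) V := by
  rw [Metric.tendstoUniformlyOn_iff]
  intro ε hε
  have hlim : Tendsto (fun l ↦ 2 * M / R * dist l c) (𝓝 c) (𝓝 0) :=
    Continuous.tendsto' (by fun_prop) _ _ (by simp)
  filter_upwards [nhdsWithin_le_nhds (hlim.eventually_lt_const hε),
    nhdsWithin_le_nhds (ball_mem_nhds c hf.radius_pos)] with l hl hlR x hx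
  rw [dist_comm]
  exact (Complex.dist_le_div_mul_dist_of_mapsTo_ball (hf.differentiableOn x hx)
    (hf.mapsTo_closedBall hx) hlR).trans_lt hl

variable [CompleteSpace G]

lemma differentiableOn_center (hf : IsBoundedDiscFamily f V c R M) (hV : IsOpen V) :
    DifferentiableOn ℂ (fun x ↦ f x c) V :=
  differentiableOn_of_tendstoUniformlyOn hV hf.tendstoUniformlyOn_center
    hf.eventually_differentiableOn

protected lemma dslope (hf : IsBoundedDiscFamily f V c R M) (hV : IsOpen V) :
    IsBoundedDiscFamily (fun x ↦ dslope (f x) c) V c R (2 * M / R) where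
  radius_pos := hf.radius_pos
  differentiableOn x hx :=
    (Complex.differentiableOn_dslope (ball_mem_nhds c hf.radius_pos)).2 (hf.differentiableOn x hx)
  norm_le x hx l hl :=
    Complex.norm_dslope_le_div_of_mapsTo_ball (hf.differentiableOn x hx)
      (hf.mapsTo_closedBall hx) hl
  eventually_differentiableOn := by
    filter_upwards [hf.eventually_differentiableOn, self_mem_nhdsWithin] with l hl hlc
    simp only [dslope_of_ne _ hlc, slope_def_module]
    exact (hl.sub (hf.differentiableOn_center hV)).const_smul _

/-- Take for `g` the Taylor polynomial of `f x` at `c` of degree less than `n`. -/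
lemma exists_differentiableOn_norm_sub_le (hf : IsBoundedDiscFamily f V c R M)
    (hV : IsOpen V) {l : ℂ} (hl : l ∈ ball c R) (n : ℕ) :
    ∃ g : X → G, DifferentiableOn ℂ g V ∧ ∀ x ∈ V, ‖f x l - g x‖ ≤ M * (2 * ‖l - c‖ / R) ^ n := by
  induction n generalizing f M with
  | zero => exact ⟨0, differentiableOn_const 0, fun x hx ↦ by simpa using hf.norm_le x hx l hl⟩
  | succ n ih =>
    obtain ⟨g, hg, hgn⟩ := ih (hf.dslope hV)
    refine ⟨fun x ↦ f x c + (l - c) • g x,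
      (hf.differentiableOn_center hV).add (hg.const_smul _), fun x hx ↦ ?_⟩
    calc ‖f x l - (f x c + (l - c) • g x)‖
        = ‖l - c‖ * ‖dslope (f x) c l - g x‖ := by
          rw [← norm_smul, smul_sub, sub_smul_dslope, sub_sub]
      _ ≤ ‖l - c‖ * (2 * M / R * (2 * ‖l - c‖ / R) ^ n) := by gcongr; exact hgn x hx
      _ = M * (2 * ‖l - c‖ / R) ^ (n + 1) := by ring

theorem differentiableOn_apply (hf : IsBoundedDiscFamily f V c R M) (hV : IsOpen V) {l : ℂ}
    (hl : l ∈ ball c (R / 2)) : DifferentiableOn ℂ (fun x ↦ f x l) V := by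
  rw [mem_ball_iff_norm] at hl
  have hR := hf.radius_pos
  have hlR : l ∈ ball c R := mem_ball_iff_norm.2 (by linarith)
  choose g hg hgn using hf.exists_differentiableOn_norm_sub_le hV hlR
  have hratio : 2 * ‖l - c‖ / R < 1 := by rw [div_lt_one hR]; linarith
  have hlim : Tendsto (fun n : ℕ ↦ M * (2 * ‖l - c‖ / R) ^ n) atTop (𝓝 0) := by
    simpa using (tendsto_pow_atTop_nhds_zero_of_lt_one (by positivity) hratio).const_mul M
  refine differentiableOn_of_tendstoUniformlyOn hV (f := g) (l := atTop) ?_ (.of_forall hg)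
  rw [Metric.tendstoUniformlyOn_iff]
  intro ε hε
  filter_upwards [hlim.eventually_lt_const hε] with n hn x hx
  exact (dist_eq_norm _ _).trans_le (hgn n x hx) |>.trans_lt hn

end IsBoundedDiscFamily

variable {F : E × X → G}

lemma isBoundedDiscFamily_lineMap {z₁ : E} {V : Set X} {r ρ R M : ℝ} (hr : 0 < r)
    (hR : 0 < R) (hM : ∀ p ∈ ball z₁ (R * ρ) ×ˢ V, ‖F p‖ ≤ M)
    (hsep : ∀ t ∈ V, DifferentiableOn ℂ (fun z ↦ F (z, t)) (ball z₁ (R * ρ)))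
    (hjoint : DifferentiableOn ℂ F (ball z₁ r ×ˢ V)) :
    IsBoundedDiscFamily (fun p l ↦ F (AffineMap.lineMap z₁ p.1 l, p.2)) (ball z₁ ρ ×ˢ V) 0 R M := by
  have hline : ∀ p ∈ ball z₁ ρ ×ˢ V, MapsTo (AffineMap.lineMap z₁ p.1) (ball (0 : ℂ) R)
      (ball z₁ (R * ρ)) := by
    rintro p ⟨hp, -⟩ l hl
    rw [mem_ball, dist_lineMap_left, dist_comm]
    exact mul_lt_mul'' (mem_ball_zero_iff.1 hl) hp (norm_nonneg _) dist_nonneg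
  refine ⟨hR, fun p hp ↦ ?_, fun p hp l hl ↦ hM _ ⟨hline p hp hl, hp.2⟩, ?_⟩
  · exact (hsep p.2 hp.2).comp (AffineMap.lineMap z₁ p.1).differentiableOn (hline p hp)
  · have hlim : Tendsto (fun l : ℂ ↦ ‖l‖ * ρ) (𝓝 0) (𝓝 0) :=
      Continuous.tendsto' (by fun_prop) _ _ (by simp)
    filter_upwards [nhdsWithin_le_nhds (hlim.eventually_lt_const hr)] with l hl
    refine hjoint.comp (f := fun p : E × X ↦ (AffineMap.lineMap z₁ p.1 l, p.2)) ?_ fun p hp ↦ ?_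
    · simp only [AffineMap.lineMap_apply_module']
      fun_prop
    · refine ⟨?_, hp.2⟩
      rw [mem_ball, dist_lineMap_left, dist_comm]
      exact (mul_le_mul_of_nonneg_left (mem_ball.1 hp.1).le (norm_nonneg l)).trans_lt hl

variable [CompleteSpace G]

lemma differentiableOn_ball_prod {z₁ : E} {V : Set X} {r ρ M : ℝ} (hr : 0 < r)
    (hV : IsOpen V) (hM : ∀ p ∈ ball z₁ (3 * ρ) ×ˢ V, ‖F p‖ ≤ M)
    (hsep : ∀ t ∈ V, DifferentiableOn ℂ (fun z ↦ F (z, t)) (ball z₁ (3 * ρ)))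
    (hjoint : DifferentiableOn ℂ F (ball z₁ r ×ˢ V)) :
    DifferentiableOn ℂ F (ball z₁ ρ ×ˢ V) := by
  have hfam := isBoundedDiscFamily_lineMap hr three_pos hM hsep hjoint
  simpa using hfam.differentiableOn_apply (isOpen_ball.prod hV) (l := 1) (by norm_num)

lemma eventually_differentiableAt_of_mem_closure {z : E} {t : X} {C : ℝ}
    (hC : ∀ᶠ p in 𝓝 (z, t), ‖F p‖ ≤ C)
    (hsep : ∀ᶠ p in 𝓝 (z, t), DifferentiableAt ℂ (fun w ↦ F (w, p.2)) p.1)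
    (hz : z ∈ closure {w | ∀ᶠ p in 𝓝 (w, t), DifferentiableAt ℂ F p}) :
    ∀ᶠ p in 𝓝 (z, t), DifferentiableAt ℂ F p := by
  obtain ⟨R, hR, hball⟩ := Metric.eventually_nhds_iff_ball.1 (hC.and hsep)
  obtain ⟨z₁, hz₁, hdist⟩ := Metric.mem_closure_iff.1 hz (R / 4) (by positivity)
  obtain ⟨r, hr, hjoint⟩ := Metric.eventually_nhds_iff_ball.1 hz₁
  simp only [← ball_prod_same] at hball hjoint
  have hsub : ball z₁ (3 * (R / 4)) ×ˢ ball t (min r R) ⊆ ball z R ×ˢ ball t R :=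
    prod_mono (ball_subset_ball' (by rw [dist_comm]; linarith))
      (ball_subset_ball (min_le_right _ _))
  have hsub' : ball z₁ r ×ˢ ball t (min r R) ⊆ ball z₁ r ×ˢ ball t r :=
    prod_mono_right (ball_subset_ball (min_le_left _ _))
  have hdiff : DifferentiableOn ℂ F (ball z₁ (R / 4) ×ˢ ball t (min r R)) :=
    differentiableOn_ball_prod hr isOpen_ball (fun p hp ↦ (hball p (hsub hp)).1)
      (fun s hs w hw ↦ (hball (w, s) (hsub ⟨hw, hs⟩)).2.differentiableWithinAt)
      (fun p hp ↦ (hjoint p (hsub' hp)).differentiableWithinAt)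
  have hopen : IsOpen (ball z₁ (R / 4) ×ˢ ball t (min r R)) := isOpen_ball.prod isOpen_ball
  exact hdiff.eventually_differentiableAt
    (hopen.mem_nhds ⟨hdist, mem_ball_self (lt_min hr hR)⟩)

theorem hartogs_tube_general {Ω D : Set E} {Δ : Set X} (hΩ : IsOpen Ω) (hΩne : Ω.Nonempty)
    (hΩD : Ω ⊆ D) (hD : IsOpen D) (hDconn : IsPreconnected D) (hΔ : IsOpen Δ)
    (hlb : ∀ x ∈ D ×ˢ Δ, ∃ t ∈ 𝓝 x, ∃ C : ℝ, ∀ y ∈ t ∩ D ×ˢ Δ, ‖F y‖ ≤ C)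
    (hF1 : DifferentiableOn ℂ F (Ω ×ˢ Δ))
    (hF2 : ∀ t₀ ∈ Δ, DifferentiableOn ℂ (fun z ↦ F (z, t₀)) D) :
    DifferentiableOn ℂ F (D ×ˢ Δ) := by
  rintro ⟨z, t⟩ ⟨hz, ht⟩
  suffices hsub : D ⊆ {w | ∀ᶠ p in 𝓝 (w, t), DifferentiableAt ℂ F p} from
    (hsub hz).self_of_nhds.differentiableWithinAt
  refine hDconn.subset_of_closure_inter_subset ?isOpen ?meets ?closure
  case isOpen =>
    refine isOpen_iff_mem_nhds.2 fun w hw ↦ ?_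
    have hcont : Tendsto (fun w : E ↦ (w, t)) (𝓝 w) (𝓝 (w, t)) :=
      Continuous.tendsto (by fun_prop) w
    exact hcont.eventually (eventually_eventually_nhds.2 hw)
  case meets =>
    obtain ⟨w, hw⟩ := hΩne
    exact ⟨w, hΩD hw, hF1.eventually_differentiableAt ((hΩ.prod hΔ).mem_nhds ⟨hw, ht⟩)⟩
  case closure =>
    rintro w ⟨hcl, hw⟩
    obtain ⟨T, hT, C, hC⟩ := hlb (w, t) ⟨hw, ht⟩
    have hDΔ : D ×ˢ Δ ∈ 𝓝 (w, t) := (hD.prod hΔ).mem_nhds ⟨hw, ht⟩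
    refine eventually_differentiableAt_of_mem_closure (C := C) ?_ ?_ hcl
    · filter_upwards [hT, hDΔ] with p hpT hp using hC p ⟨hpT, hp⟩
    · filter_upwards [hDΔ] with p hp using (hF2 p.2 hp.2).differentiableAt (hD.mem_nhds hp.1)

end

/-- Hartogs-type lemma for tubes (Lemma `separate_analy`):
Let `Ω` be the tube over an open set `U ⊆ ℝⁿ`, assumed nonempty and connected, and let
`Δ = ball c r` be an open disc in `ℂ`.  If `F` is locally bounded on `Conv(Ω) × Δ`,
holomorphic on `Ω × Δ`, and holomorphic in the first variable on `Conv(Ω)` for every fixed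
`t₀ ∈ Δ`, then `F` is holomorphic on `Conv(Ω) × Δ`. -/
theorem hartogs_tube (n : ℕ) (U : Set (Fin n → ℝ)) (hU : IsOpen U)
    (Ω : Set (Fin n → ℂ)) (hΩ : Ω = {z : Fin n → ℂ | (fun i => (z i).re) ∈ U})
    (hΩconn : IsConnected Ω)
    (c : ℂ) (r : ℝ) (hr : 0 < r)
    (F : (Fin n → ℂ) × ℂ → ℂ)
    (hlb : ∀ x ∈ (convexHull ℝ Ω) ×ˢ Metric.ball c r,
      ∃ t ∈ nhds x, ∃ C : ℝ, ∀ y ∈ t ∩ ((convexHull ℝ Ω) ×ˢ Metric.ball c r), ‖F y‖ ≤ C)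
    (hF1 : DifferentiableOn ℂ F (Ω ×ˢ Metric.ball c r))
    (hF2 : ∀ t₀ ∈ Metric.ball c r,
      DifferentiableOn ℂ (fun z => F (z, t₀)) (convexHull ℝ Ω)) :
    DifferentiableOn ℂ F ((convexHull ℝ Ω) ×ˢ Metric.ball c r) := by
  have hΩopen : IsOpen Ω := hΩ ▸ hU.preimage (by fun_prop)
  exact hartogs_tube_general hΩopen hΩconn.nonempty (subset_convexHull ℝ Ω) hΩopen.convexHull
    (convex_convexHull ℝ Ω).isPreconnected Metric.isOpen_ball hlb hF1 hF2
end

section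
/- Let U ⊆ ℝⁿ be a nonempty open set. For a set A ⊆ ℝⁿ write T(A) := { z ∈ ℂⁿ : (Re z₁, …, Re zₙ) ∈ A } for the tube over A. Let F be holomorphic on T(conv(U)), where conv(U) is the convex hull of U in ℝⁿ, and assume F is bounded on T(conv(U)). Then sup_{z ∈ T(conv U)} |F(z)| = sup_{z ∈ T(U)} |F(z)|. -/
/-- The tube over a set `A ⊆ ℝⁿ`: all `z ∈ ℂⁿ` with `Re z ∈ A`. -/
def tube {n : ℕ} (A : Set (Fin n → ℝ)) : Set (Fin n → ℂ) :=
  {z : Fin n → ℂ | (fun i => (z i).re) ∈ A}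

/-!
Fix a bound `M` for `‖F‖` on the tube over `U`. The points `x` of `conv U` such that `‖F‖ ≤ M` on
the whole fibre `Re z = x` form a convex set: given two such points `x` and `y`, each `v` with
`Re v` on the segment from `x` to `y` lies on the complex line through `x + i Im v` and
`y + i Im v`, and the part of that line over the segment is a closed strip whose two edges lie over
`x` and `y`, so the maximum principle for bounded functions on a strip applies. This convex set
contains `U`, hence equals `conv U`.
-/

section

open Set Complex AffineMap

variable {E : Type*} [NormedAddCommGroup E] [NormedSpace ℂ E] {n : ℕ}

theorem norm_le_of_mem_verticalStrip_of_bounded {f : ℂ → E} {a b C M : ℝ} {z : ℂ}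
    (hf : DiffContOnCl ℂ f (re ⁻¹' Ioo a b)) (hC : ∀ ζ ∈ re ⁻¹' Ioo a b, ‖f ζ‖ ≤ C)
    (ha : ∀ ζ : ℂ, ζ.re = a → ‖f ζ‖ ≤ M) (hb : ∀ ζ : ℂ, ζ.re = b → ‖f ζ‖ ≤ M)
    (hz : z.re ∈ Icc a b) : ‖f z‖ ≤ M := by
  rcases hz.1.eq_or_lt with hza | hza
  · exact ha z hza.symm
  have hab : 0 < b - a := sub_pos.2 (hza.trans_le hz.2)
  refine PhragmenLindelof.vertical_strip hf
    ⟨0, div_pos Real.pi_pos hab, 0, Asymptotics.IsBigO.of_bound C ?_⟩ ha hb hz.1 hz.2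
  filter_upwards [Filter.mem_inf_of_right (Filter.mem_principal_self _)] with ζ hζ
  simpa using hC ζ hζ

theorem norm_lineMap_le_of_bounded {V : Type*} [NormedAddCommGroup V] [NormedSpace ℂ V]
    {F : V → E} {s : Set V} {z w : V} {ζ : ℂ} {C M : ℝ} (hF : DifferentiableOn ℂ F s)
    (hC : ∀ v ∈ s, ‖F v‖ ≤ C) (hs : MapsTo (lineMap z w) (re ⁻¹' Icc 0 1) s)
    (hz : ∀ ξ : ℂ, ξ.re = 0 → ‖F (lineMap z w ξ)‖ ≤ M)
    (hw : ∀ ξ : ℂ, ξ.re = 1 → ‖F (lineMap z w ξ)‖ ≤ M) (hζ : ζ.re ∈ Icc 0 1) :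
    ‖F (lineMap z w ζ)‖ ≤ M := by
  have hline : Differentiable ℂ (lineMap z w : ℂ → V) := by fun_prop
  have hd : DifferentiableOn ℂ (F ∘ lineMap z w) (closure (re ⁻¹' Ioo 0 1)) := by
    rw [closure_preimage_re, closure_Ioo zero_ne_one]
    exact hF.comp hline.differentiableOn hs
  exact norm_le_of_mem_verticalStrip_of_bounded hd.diffContOnCl
    (fun ξ hξ => hC _ (hs (Ioo_subset_Icc_self hξ))) hz hw hζ

theorem tube_mono {A B : Set (Fin n → ℝ)} (h : A ⊆ B) : tube A ⊆ tube B :=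
  fun _ hz => h hz

theorem tube_nonempty {A : Set (Fin n → ℝ)} (h : A.Nonempty) : (tube A).Nonempty :=
  let ⟨x, hx⟩ := h
  ⟨fun i => x i, hx⟩

theorem exists_lineMap_mem_tube {x y : Fin n → ℝ} {t : ℝ} {v : Fin n → ℂ}
    (hv : v ∈ tube {lineMap x y t}) :
    ∃ z w : Fin n → ℂ, lineMap z w (t : ℂ) = v ∧
      ∀ ζ : ℂ, lineMap z w ζ ∈ tube {lineMap x y ζ.re} := by
  let z : Fin n → ℂ := fun i => ⟨x i, (v i).im⟩
  let w : Fin n → ℂ := fun i => ⟨y i, (v i).im⟩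
  have hre (ζ : ℂ) (i : Fin n) : (lineMap z w ζ i).re = lineMap x y ζ.re i := by
    simp [z, w, pi_lineMap_apply, lineMap_apply]
  refine ⟨z, w, ?_, fun ζ => funext (hre ζ)⟩
  ext i
  apply Complex.ext
  · exact (hre t i).trans (congrFun hv i).symm
  · simp [z, w, pi_lineMap_apply, lineMap_apply]

theorem convex_setOf_norm_le_on_fiber {A : Set (Fin n → ℝ)} {F : (Fin n → ℂ) → E} {C : ℝ}
    (hA : Convex ℝ A) (hF : DifferentiableOn ℂ F (tube A)) (hC : ∀ z ∈ tube A, ‖F z‖ ≤ C)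
    (M : ℝ) : Convex ℝ {x ∈ A | ∀ z ∈ tube {x}, ‖F z‖ ≤ M} := by
  simp only [convex_iff_segment_subset, segment_eq_image_lineMap]
  rintro x ⟨hxA, hxM⟩ y ⟨hyA, hyM⟩ _ ⟨t, ht, rfl⟩
  refine ⟨hA.lineMap_mem hxA hyA ht, fun v hv => ?_⟩
  obtain ⟨z, w, rfl, hzw⟩ := exists_lineMap_mem_tube hv
  have hstrip : MapsTo (lineMap z w) (re ⁻¹' Icc 0 1) (tube A) := fun ζ hζ =>
    tube_mono (singleton_subset_iff.2 (hA.lineMap_mem hxA hyA hζ)) (hzw ζ)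
  have hx : ∀ ζ : ℂ, ζ.re = 0 → ‖F (lineMap z w ζ)‖ ≤ M := fun ζ hζ =>
    hxM _ (by simpa only [hζ, lineMap_apply_zero] using hzw ζ)
  have hy : ∀ ζ : ℂ, ζ.re = 1 → ‖F (lineMap z w ζ)‖ ≤ M := fun ζ hζ =>
    hyM _ (by simpa only [hζ, lineMap_apply_one] using hzw ζ)
  exact norm_lineMap_le_of_bounded hF hC hstrip hx hy ht

theorem norm_le_on_tube_convexHull {U : Set (Fin n → ℝ)} {F : (Fin n → ℂ) → E} {C M : ℝ}
    (hF : DifferentiableOn ℂ F (tube (convexHull ℝ U)))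
    (hC : ∀ z ∈ tube (convexHull ℝ U), ‖F z‖ ≤ C) (hM : ∀ z ∈ tube U, ‖F z‖ ≤ M) :
    ∀ z ∈ tube (convexHull ℝ U), ‖F z‖ ≤ M := by
  intro z hz
  have hU : U ⊆ {x ∈ convexHull ℝ U | ∀ z ∈ tube {x}, ‖F z‖ ≤ M} := fun x hx =>
    ⟨subset_convexHull ℝ U hx, fun z hz => hM z (tube_mono (singleton_subset_iff.2 hx) hz)⟩
  have hconv := convex_setOf_norm_le_on_fiber (convex_convexHull ℝ U) hF hC M
  exact (convexHull_min hU hconv hz).2 z rfl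

theorem sup_tube_convexHull_general {U : Set (Fin n → ℝ)} (hUne : U.Nonempty)
    {F : (Fin n → ℂ) → E} (hF : DifferentiableOn ℂ F (tube (convexHull ℝ U)))
    (hb : ∃ C : ℝ, ∀ z ∈ tube (convexHull ℝ U), ‖F z‖ ≤ C) :
    sSup ((fun z => ‖F z‖) '' tube (convexHull ℝ U)) =
      sSup ((fun z => ‖F z‖) '' tube U) := by
  obtain ⟨C, hC⟩ := hb
  have hsub : tube U ⊆ tube (convexHull ℝ U) := tube_mono (subset_convexHull ℝ U)
  have hne : (tube U).Nonempty := tube_nonempty hUne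
  have hbdd : BddAbove ((fun z => ‖F z‖) '' tube (convexHull ℝ U)) :=
    ⟨C, forall_mem_image.2 hC⟩
  have hM : ∀ z ∈ tube U, ‖F z‖ ≤ sSup ((fun z => ‖F z‖) '' tube U) := fun z hz =>
    le_csSup (hbdd.mono (image_mono hsub)) (mem_image_of_mem _ hz)
  apply le_antisymm
  · exact csSup_le ((hne.mono hsub).image _)
      (forall_mem_image.2 (norm_le_on_tube_convexHull hF hC hM))
  · exact csSup_le_csSup hbdd (hne.image _) (image_mono hsub)

end

/-- Sup-norm equality for tubes over convex hulls (from the proof of Lemma `convh`):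
if `F` is holomorphic and bounded on the tube over `conv(U)`, then its sup over the tube
over `conv(U)` equals its sup over the tube over `U`. -/
theorem sup_tube_convexHull (n : ℕ) (U : Set (Fin n → ℝ)) (hUne : U.Nonempty)
    (hUo : IsOpen U) (F : (Fin n → ℂ) → ℂ)
    (hF : DifferentiableOn ℂ F (tube (convexHull ℝ U)))
    (hb : ∃ C : ℝ, ∀ z ∈ tube (convexHull ℝ U), ‖F z‖ ≤ C) :
    sSup ((fun z => ‖F z‖) '' tube (convexHull ℝ U)) =
      sSup ((fun z => ‖F z‖) '' tube U) :=
  sup_tube_convexHull_general hUne hF hb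
end
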